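/- arXiv:1008.2059 — 2 statements merged into one kernel-verified Lean document; each statement's English description precedes it below -/
import Mathlib

section
/- Let R' and R be finite S_ℚ-rings and let ι : R' → R be an injective ring homomorphism whose cokernel (as an abelian group) is finite of cardinality d, so that R' may be identified with a subring of finite index d in R. Let p be a prime, and let f_p and f_p' denote the number of ring homomorphisms to F̄_p from R and from R' respectively. Then f_p ≥ f_p' ≥ f_p − ν_p(d). -/
/-!
Restriction along `f : A → B` maps `Hom(B, K)` to `Hom(A, K)`. When `f` is injective of finite
index it is integral, so every homomorphism from `A` to an algebraically closed field extends to
`B` and restriction is surjective.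

For the other bound, distinct ring homomorphisms `B → K` are linearly independent in the
`K`-vector space of additive maps `B → K` (Dedekind). Restricting additive maps to `A` sends them
into the span of `Hom(A, K)`, with kernel the space of additive maps `B / A → K`. In characteristic
`p` such maps factor through the largest `p`-torsion quotient of `B / A`, so the kernel has
dimension at most `ν_p |B / A|`.
-/

open Cardinal Function Polynomial

universe u

section IntegralExtension

variable {A B : Type*} [CommRing A] [CommRing B] {f : A →+* B}

-- By pigeonhole, two powers of any `x` agree modulo the range of `f`.
theorem isIntegral_of_finite_quotient_range [Finite (B ⧸ f.toAddMonoidHom.range)] :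
    f.IsIntegral := by
  intro x
  obtain ⟨m, n, hne, heq⟩ := Finite.exists_ne_map_eq_of_infinite
    fun k : ℕ => (QuotientAddGroup.mk (x ^ k) : B ⧸ f.toAddMonoidHom.range)
  wlog hlt : m < n generalizing m n
  · exact this n m hne.symm heq.symm (by omega)
  obtain ⟨a, ha⟩ : ∃ a, f a = -x ^ m + x ^ n := QuotientAddGroup.eq.mp heq
  have hdeg : (X ^ m + C a).degree < (n : WithBot ℕ) :=
    (degree_add_le_of_degree_le (degree_X_pow_le m)
      (degree_C_le.trans (Nat.cast_nonneg m))).trans_lt (Nat.cast_lt.mpr hlt)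
  exact ⟨X ^ n - (X ^ m + C a), monic_X_pow_sub hdeg, by simp [ha]⟩

theorem exists_ringHom_comp_eq_of_isIntegral {K : Type*} [Field K] [IsAlgClosed K]
    (hf : f.IsIntegral) (ψ : A →+* K) (hker : RingHom.ker f ≤ RingHom.ker ψ) :
    ∃ φ : B →+* K, φ.comp f = ψ := by
  algebraize [f]
  let P := RingHom.ker ψ
  have : P.IsPrime := RingHom.ker_isPrime ψ
  obtain ⟨Q, -, _, hQP⟩ := Ideal.exists_ideal_over_prime_of_isIntegral P (⊥ : Ideal B) hker
  have : Q.LiesOver P := ⟨hQP.symm⟩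
  let : Algebra (A ⧸ P) K := (RingHom.kerLift ψ).toAlgebra
  have : Module.IsTorsionFree (A ⧸ P) K :=
    Module.isTorsionFree_iff_algebraMap_injective.2 (RingHom.kerLift_injective ψ)
  have : Module.IsTorsionFree (A ⧸ P) (B ⧸ Q) :=
    Module.isTorsionFree_iff_faithfulSMul.2 inferInstance
  let L : B ⧸ Q →ₐ[A ⧸ P] K := IsAlgClosed.lift
  exact ⟨L.toRingHom.comp (Ideal.Quotient.mk Q),
    RingHom.ext fun x => L.commutes (Ideal.Quotient.mk P x)⟩

theorem surjective_ringHom_comp_of_isIntegral {K : Type*} [Field K] [IsAlgClosed K]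
    (hf : f.IsIntegral) (hinj : Injective f) :
    Surjective fun φ : B →+* K => φ.comp f := fun ψ =>
  exists_ringHom_comp_eq_of_isIntegral hf ψ <| by
    simp only [(RingHom.injective_iff_ker_eq_bot f).1 hinj, bot_le]

end IntegralExtension

section Rank

theorem enatCard_le_add_rank_ker_of_linearIndependent {K M N α β : Type*} [DivisionRing K]
    [AddCommGroup M] [Module K M] [AddCommGroup N] [Module K N] {g : M →ₗ[K] N}
    {v : α → M} (hv : LinearIndependent K v) {w : β → N}
    (hvw : ∀ a, g (v a) ∈ Submodule.span K (Set.range w)) :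
    ENat.card α ≤ ENat.card β + toENat (Module.rank K (LinearMap.ker g)) := by
  let W := Submodule.span K (Set.range w)
  have hv' : LinearIndependent K fun a => (⟨v a, hvw a⟩ : W.comap g) :=
    .of_comp (W.comap g).subtype hv
  have hW : toENat (Module.rank K W) ≤ ENat.card β :=
    calc toENat (Module.rank K W) ≤ ENat.card (Set.range w) := toENat.monotone' (rank_span_le _)
      _ ≤ ENat.card β := ENat.card_le_card_of_injective (Set.rangeSplitting_injective w)
  calc ENat.card α ≤ toENat (Module.rank K (W.comap g)) := by
        simpa using! toENat.monotone' hv'.cardinal_lift_le_rank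
    _ ≤ toENat (Module.rank K W) + toENat (Module.rank K (LinearMap.ker g)) := by
        simpa using! toENat.monotone' (LinearMap.lift_rank_comap_le (f := g) W)
    _ ≤ ENat.card β + toENat (Module.rank K (LinearMap.ker g)) := by gcongr

theorem rank_ker_lcomp_eq_of_exact {R S M E : Type*} {N P : Type u} [CommRing R] [Ring S]
    [AddCommGroup M] [AddCommGroup N] [AddCommGroup P] [AddCommGroup E]
    [Module R M] [Module R N] [Module R P] [Module R E] [Module S E] [SMulCommClass R S E]
    {f : M →ₗ[R] N} {g : N →ₗ[R] P} (hfg : Exact f g) (hg : Surjective g) :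
    Module.rank S (LinearMap.ker (LinearMap.lcomp S E f)) = Module.rank S (P →ₗ[R] E) := by
  have hexact : Exact (LinearMap.lcomp S E g) (LinearMap.lcomp S E f) :=
    LinearMap.exact_lcomp_of_exact_of_surjective E hfg hg
  rw [hexact.linearMap_ker_eq,
    rank_range_of_injective _ (LinearMap.lcomp_injective_of_surjective g hg)]

variable (A : Type*) [AddCommGroup A] [Finite A]

instance finite_modN (n : ℕ) : Finite (ModN A n) :=
  .of_surjective _ (Submodule.mkQ_surjective _)

variable (p : ℕ) [Fact p.Prime]

theorem rank_modN_le_padicValNat :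
    Module.rank (ZMod p) (ModN A p) ≤ padicValNat p (Nat.card A) := by
  have hcard : Nat.card (ModN A p) = p ^ Module.finrank (ZMod p) (ModN A p) := by
    rw [Module.natCard_eq_pow_finrank (K := ZMod p), Nat.card_zmod]
  rw [← Module.finrank_eq_rank, Nat.cast_le, ← padicValNat_dvd_iff_le Nat.card_pos.ne', ← hcard]
  exact AddSubgroup.card_quotient_dvd_card _

theorem rank_intLinearMap_le_padicValNat (K : Type*) [Field K] [CharP K p] :
    Module.rank K (A →ₗ[ℤ] K) ≤ padicValNat p (Nat.card A) := by
  algebraize [ZMod.castHom dvd_rfl K]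
  let inflate : (ModN A p →ₗ[ZMod p] K) →ₗ[K] A →ₗ[ℤ] K :=
    { toFun φ := (φ.toAddMonoidHom.comp (ModN.mkQ p)).toIntLinearMap
      map_add' _ _ := rfl
      map_smul' _ _ := rfl }
  have hsurj : Surjective inflate := fun φ =>
    ⟨ModN.liftEquiv'.symm ⟨φ.toAddMonoidHom, by simp⟩, rfl⟩
  calc Module.rank K (A →ₗ[ℤ] K)
    _ ≤ Module.rank K (ModN A p →ₗ[ZMod p] K) := LinearMap.rank_le_of_surjective inflate hsurj
    _ = lift (Module.rank (ZMod p) (ModN A p)) := Module.rank_linearMap_self ..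
    _ ≤ padicValNat p (Nat.card A) := by simpa using! rank_modN_le_padicValNat A p

end Rank

section Count

variable {A B : Type*} [CommRing A] [CommRing B] (f : A →+* B)
  [Finite (B ⧸ f.toAddMonoidHom.range)] (p : ℕ) [Fact p.Prime] (K : Type*) [Field K] [CharP K p]

theorem rank_ker_lcomp_ringHom_le_padicValNat :
    Module.rank K (LinearMap.ker (LinearMap.lcomp K K f.toAddMonoidHom.toIntLinearMap)) ≤
      padicValNat p (Nat.card (B ⧸ f.toAddMonoidHom.range)) := by
  let π := QuotientAddGroup.mk' f.toAddMonoidHom.range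
  have hexact : Exact f.toAddMonoidHom.toIntLinearMap π.toIntLinearMap :=
    QuotientAddGroup.eq_zero_iff
  rw [rank_ker_lcomp_eq_of_exact hexact (QuotientAddGroup.mk'_surjective _)]
  exact rank_intLinearMap_le_padicValNat _ p K

theorem enatCard_ringHom_le_add_padicValNat :
    ENat.card (B →+* K) ≤
      ENat.card (A →+* K) + padicValNat p (Nat.card (B ⧸ f.toAddMonoidHom.range)) := by
  let restrict := LinearMap.lcomp K K f.toAddMonoidHom.toIntLinearMap
  have hindep : LinearIndependent K fun φ : B →+* K => φ.toIntAlgHom.toLinearMap :=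
    (linearIndependent_algHom_toLinearMap ℤ B K).comp _ RingHom.toIntAlgHom_injective
  have hspan (φ : B →+* K) : restrict φ.toIntAlgHom.toLinearMap ∈
      Submodule.span K (Set.range fun ψ : A →+* K => ψ.toIntAlgHom.toLinearMap) :=
    Submodule.subset_span ⟨φ.comp f, rfl⟩
  calc ENat.card (B →+* K)
    _ ≤ ENat.card (A →+* K) + toENat (Module.rank K (LinearMap.ker restrict)) :=
      enatCard_le_add_rank_ker_of_linearIndependent hindep hspan
    _ ≤ ENat.card (A →+* K) + padicValNat p (Nat.card (B ⧸ f.toAddMonoidHom.range)) := by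
      gcongr
      exact toENat_le_natCast.2 (rank_ker_lcomp_ringHom_le_padicValNat f p K)

theorem stmt_3_general [IsAlgClosed K] (hinj : Injective f) :
    ENat.card (A →+* K) ≤ ENat.card (B →+* K) ∧
      ENat.card (B →+* K) ≤
        ENat.card (A →+* K) + padicValNat p (Nat.card (B ⧸ f.toAddMonoidHom.range)) :=
  have hsurj := surjective_ringHom_comp_of_isIntegral isIntegral_of_finite_quotient_range hinj
  ⟨ENat.card_le_card_of_injective (injective_surjInv hsurj),
    enatCard_ringHom_le_add_padicValNat f p K⟩

end Count

instance finite_ringHom_of_module_finite (A K : Type*) [CommRing A] [Module.Finite ℤ A]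
    [Field K] : Finite (A →+* K) :=
  .of_equiv (A →ₐ[ℤ] K) (RingHom.equivIntAlgHom A K).symm

/-- If `ι : R' → R` is an injective ring homomorphism of finite `S_ℚ`-rings
whose cokernel (as an abelian group) is finite of cardinality `d`, then the numbers of ring
homomorphisms to `F̄_p` satisfy `f_p ≥ f_p' ≥ f_p - ν_p(d)`. -/
theorem stmt_3 (R' R : Type*) [CommRing R'] [CommRing R]
    [Module.Free ℤ R'] [Module.Finite ℤ R'] [IsReduced R']
    [Module.Free ℤ R] [Module.Finite ℤ R] [IsReduced R]
    (ι : R' →+* R) (hinj : Function.Injective ι)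
    (d : ℕ) (hdfin : Finite (R ⧸ ι.toAddMonoidHom.range))
    (hd : d = Nat.card (R ⧸ ι.toAddMonoidHom.range))
    (p : ℕ) [hp : Fact p.Prime]
    (fp fp' : ℕ)
    (hfp : fp = Nat.card (R →+* AlgebraicClosure (ZMod p)))
    (hfp' : fp' = Nat.card (R' →+* AlgebraicClosure (ZMod p))) :
    fp' ≤ fp ∧ (fp : ℤ) - (padicValNat p d : ℤ) ≤ (fp' : ℤ) := by
  simpa only [ENat.card_eq_coe_natCard, ← hfp, ← hfp', ← hd, sub_le_iff_le_add, ← Nat.cast_add,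
    Nat.cast_le] using stmt_3_general ι p (AlgebraicClosure (ZMod p)) hinj
end

section
/- Let h(x) ∈ ℤ[x] be a monic polynomial of degree n whose discriminant δ_h is nonzero, and let p be a prime with ν_p(δ_h) ≤ 1. Then the number of distinct roots in F̄_p of the reduction of h(x) modulo p equals n − ν_p(δ_h). -/
open scoped Classical

/-!
Let `π` be a prime of `R` and `φ : R → K` a map to a field with kernel `(π)` over which `h` splits,
with roots `r₁, …, rₙ`. The trace matrix `T` of the power basis of `R[x]/(h)` has entries the power
sums of the roots, so it reduces to `VᵀV`, where `V` is the Vandermonde matrix of the `rᵢ`. Hence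
`π ∣ det T` exactly when two roots coincide. If at least two roots were lost, every minor of `V` of
order `n - 1` would have two equal rows, so `adj T = adj V · (adj V)ᵀ` would vanish modulo `π`, and
this forces `π² ∣ det T`.
-/

open Polynomial Matrix Finset

section SpectralMapping

variable {ι R K : Type*} [Fintype ι] [DecidableEq ι] [CommRing R] [IsDomain R] [Field K]

lemma det_aeval_eq_prod_roots_charpoly_of_splits {A : Matrix ι ι R} (hA : A.charpoly.Splits)
    {f : R[X]} (hf : f.Splits) : (aeval A f).det = (A.charpoly.roots.map f.eval).prod := by
  have card_roots : A.charpoly.roots.card = Fintype.card ι := by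
    rw [← hA.natDegree_eq_card_roots, charpoly_natDegree_eq_dim]
  induction hf using Submonoid.closure_induction with
  | one => simp
  | mul f g _ _ ihf ihg => simp only [map_mul, det_mul, eval_mul, Multiset.prod_map_mul, ihf, ihg]
  | mem f hf =>
    obtain ⟨c, rfl⟩ | ⟨b, rfl⟩ := hf
    · simp [card_roots, Algebra.algebraMap_eq_smul_one]
    · have neg_aeval : aeval A (X + C b) = -(scalar ι (-b) - A) := by
        simp [Algebra.algebraMap_eq_smul_one, smul_one_eq_diagonal, ← diagonal_neg]
      have eval_charpoly_neg : A.charpoly.eval (-b) =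
          (A.charpoly.roots.map fun a ↦ -b - a).prod := by
        conv_lhs => rw [hA.eq_prod_roots_of_monic A.charpoly_monic]
        simp [eval_multiset_prod]
      rw [neg_aeval, det_neg, ← eval_charpoly, eval_charpoly_neg, ← card_roots,
        ← Multiset.card_map (fun a ↦ -b - a), ← Multiset.prod_map_neg, Multiset.map_map]
      simp [add_comm]

lemma roots_charpoly_aeval [IsAlgClosed K] (A : Matrix ι ι K) (f : K[X]) :
    (aeval A f).charpoly.roots = A.charpoly.roots.map f.eval := by
  suffices (aeval A f).charpoly = ((A.charpoly.roots.map f.eval).map (X - C ·)).prod by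
    rw [this, roots_multiset_prod_X_sub_C]
  refine Polynomial.funext fun t ↦ ?_
  have aeval_sub : aeval A (C t - f) = scalar ι t - aeval A f := by
    simp [Algebra.algebraMap_eq_smul_one, smul_one_eq_diagonal]
  rw [eval_charpoly, ← aeval_sub, det_aeval_eq_prod_roots_charpoly_of_splits
    (IsAlgClosed.splits _) (IsAlgClosed.splits _)]
  simp [eval_multiset_prod]

lemma trace_pow_eq_sum_roots_charpoly_of_splits {A : Matrix ι ι K} (hA : A.charpoly.Splits)
    (k : ℕ) : (A ^ k).trace = (A.charpoly.roots.map (· ^ k)).sum := by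
  let i := algebraMap K (AlgebraicClosure K)
  have roots_pow := roots_charpoly_aeval (i.mapMatrix A) (X ^ k)
  rw [map_pow, aeval_X] at roots_pow
  apply i.injective
  calc i (A ^ k).trace = (i.mapMatrix A ^ k).trace := by
        rw [← map_pow, AddMonoidHom.map_trace]; rfl
    _ = i (A.charpoly.roots.map (· ^ k)).sum := by
        rw [trace_eq_sum_roots_charpoly, roots_pow, RingHom.mapMatrix_apply, charpoly_map,
          hA.roots_map, map_multiset_sum]
        simp

end SpectralMapping

section TraceMatrix

variable {R S K : Type*} [CommRing R] [CommRing S] [Algebra R S] [Field K]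

lemma map_trace_gen_pow_eq_sum_roots (pb : PowerBasis R S) {φ : R →+* K}
    (hsplits : ((minpoly R pb.gen).map φ).Splits) (k : ℕ) :
    φ (Algebra.trace R S (pb.gen ^ k)) = (((minpoly R pb.gen).map φ).roots.map (· ^ k)).sum := by
  let M := Algebra.leftMulMatrix pb.basis pb.gen
  have charpoly_M : (φ.mapMatrix M).charpoly = (minpoly R pb.gen).map φ := by
    rw [RingHom.mapMatrix_apply, charpoly_map, charpoly_leftMulMatrix]
  rw [← charpoly_M] at hsplits ⊢
  rw [← trace_pow_eq_sum_roots_charpoly_of_splits hsplits,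
    Algebra.trace_eq_matrix_trace pb.basis, map_pow, ← map_pow φ.mapMatrix, AddMonoidHom.map_trace]
  rfl

lemma map_traceMatrix_powerBasis_eq_vandermonde_mul (pb : PowerBasis R S) {φ : R →+* K}
    (hsplits : ((minpoly R pb.gen).map φ).Splits) {r : Fin pb.dim → K}
    (hr : univ.val.map r = ((minpoly R pb.gen).map φ).roots) :
    (Algebra.traceMatrix R pb.basis).map φ = (vandermonde r)ᵀ * vandermonde r := by
  ext i j
  rw [map_apply, Algebra.traceMatrix_apply, Algebra.traceForm_apply, pb.basis_eq_pow,
    pb.basis_eq_pow, ← pow_add, map_trace_gen_pow_eq_sum_roots pb hsplits, ← hr,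
    vandermonde_transpose_mul_vandermonde, Multiset.map_map]
  rfl

lemma minpoly_root_of_monic {h : R[X]} (hm : h.Monic) : minpoly R (AdjoinRoot.root h) = h := by
  have integral : IsIntegral R (AdjoinRoot.root h) := ⟨h, hm, AdjoinRoot.eval₂_root h⟩
  have dvd_minpoly : h ∣ minpoly R (AdjoinRoot.root h) := by
    rw [← AdjoinRoot.mk_eq_zero, ← AdjoinRoot.aeval_eq, minpoly.aeval]
  exact eq_of_monic_of_dvd_of_natDegree_le hm (minpoly.monic integral) dvd_minpoly
    (natDegree_le_natDegree (minpoly.min R _ hm (AdjoinRoot.eval₂_root h)))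

end TraceMatrix

section Determinant

variable {R : Type*} [CommRing R]

lemma adjugate_vandermonde_eq_zero [DecidableEq R] {n : ℕ} {r : Fin n → R}
    (hr : #(univ.image r) + 1 < n) : (vandermonde r).adjugate = 0 := by
  ext i j
  obtain ⟨a, ha, b, hb, a_ne_b, ra_eq_rb⟩ :
      ∃ a ∈ univ.erase j, ∃ b ∈ univ.erase j, a ≠ b ∧ r a = r b := by
    refine exists_ne_map_eq_of_card_lt_of_maps_to (t := univ.image r) ?_
      fun a _ ↦ mem_coe.mpr (mem_image_of_mem r (mem_univ a))
    rw [card_erase_of_mem (mem_univ _), card_univ, Fintype.card_fin]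
    lia
  rw [adjugate_apply]
  refine det_zero_of_row_eq a_ne_b ?_
  rw [updateRow_ne (ne_of_mem_erase ha), updateRow_ne (ne_of_mem_erase hb)]
  ext c
  simp only [vandermonde_apply, ra_eq_rb]

-- With `adj T = π B` and `det T = π d`, cancelling `π` in `T * adj T = det T` gives `T * B = d`.
lemma sq_dvd_det_of_dvd_adjugate {ι : Type*} [Fintype ι] [DecidableEq ι] [Nonempty ι] [IsDomain R]
    {π : R} (hπ : Prime π) {T : Matrix ι ι R} (hT : ∀ i j, π ∣ T.adjugate i j) : π ^ 2 ∣ T.det := by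
  choose B hB using hT
  have adjugate_eq : T.adjugate = π • of B := by ext i j; simp [hB]
  obtain ⟨d, hd⟩ : π ∣ T.det := by
    let i := Classical.arbitrary ι
    rw [T.det_eq_sum_mul_adjugate_row i]
    exact dvd_sum fun j _ ↦ (hB j i ▸ dvd_mul_right _ _).mul_left _
  have mul_B : T * of B = d • (1 : Matrix ι ι R) := by
    refine smul_right_injective _ hπ.ne_zero ?_
    simp only [← mul_smul, ← hd, ← T.mul_adjugate, adjugate_eq, mul_smul_comm]
  have det_mul_det : T.det * (of B).det = d ^ Fintype.card ι := by
    rw [← det_mul, mul_B, det_smul, det_one, mul_one]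
  have π_dvd_d : π ∣ d :=
    hπ.dvd_of_dvd_pow (det_mul_det ▸ (hd ▸ dvd_mul_right π d).mul_right _)
  rw [hd, sq]
  exact mul_dvd_mul_left π π_dvd_d

variable {K : Type*} [Field K] {φ : R →+* K} {π : R} {n : ℕ} {T : Matrix (Fin n) (Fin n) R}
  {r : Fin n → K}

lemma dvd_det_iff_not_injective_of_map_eq_vandermonde_mul (hker : RingHom.ker φ = Ideal.span {π})
    (hT : T.map φ = (vandermonde r)ᵀ * vandermonde r) : π ∣ T.det ↔ ¬ r.Injective := by
  rw [← Ideal.mem_span_singleton, ← hker, RingHom.mem_ker, RingHom.map_det, RingHom.mapMatrix_apply,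
    hT, det_mul, det_transpose, mul_self_eq_zero, ← det_vandermonde_ne_zero_iff, not_not]

lemma le_card_image_add_one_of_map_eq_vandermonde_mul [IsDomain R] [DecidableEq K]
    (hπ : Prime π) (hker : RingHom.ker φ = Ideal.span {π})
    (hT : T.map φ = (vandermonde r)ᵀ * vandermonde r) (hsq : ¬ π ^ 2 ∣ T.det) :
    n ≤ #(univ.image r) + 1 := by
  by_contra! two_lost
  have : Nonempty (Fin n) := ⟨⟨0, by lia⟩⟩
  have map_adjugate : T.adjugate.map φ = 0 := by
    rw [← RingHom.mapMatrix_apply, RingHom.map_adjugate, RingHom.mapMatrix_apply, hT,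
      adjugate_mul_distrib, adjugate_vandermonde_eq_zero two_lost, zero_mul]
  refine hsq (sq_dvd_det_of_dvd_adjugate hπ fun i j ↦ ?_)
  rw [← Ideal.mem_span_singleton, ← hker, RingHom.mem_ker]
  exact congrFun₂ map_adjugate i j

lemma card_image_add_multiplicity_det_of_map_eq_vandermonde_mul [IsDomain R] [DecidableEq K]
    (hπ : Prime π) (hker : RingHom.ker φ = Ideal.span {π})
    (hT : T.map φ = (vandermonde r)ᵀ * vandermonde r) (hsq : ¬ π ^ 2 ∣ T.det) :
    #(univ.image r) + multiplicity π T.det = n := by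
  have dvd_iff := dvd_det_iff_not_injective_of_map_eq_vandermonde_mul hker hT
  by_cases injective_r : r.Injective
  · rw [multiplicity_eq_zero.mpr (by tauto), card_image_of_injective _ injective_r, card_univ,
      Fintype.card_fin, add_zero]
  · have multiplicity_eq_one : multiplicity π T.det = 1 :=
      multiplicity_eq_of_dvd_of_not_dvd (by simpa using dvd_iff.mpr injective_r) hsq
    have card_ne : #(univ.image r) ≠ #(univ : Finset (Fin n)) := by
      rwa [Ne, card_image_iff, coe_univ, Set.injOn_univ]
    have card_le : #(univ.image r) ≤ #(univ : Finset (Fin n)) := card_image_le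
    have le_card := le_card_image_add_one_of_map_eq_vandermonde_mul hπ hker hT hsq
    rw [card_univ, Fintype.card_fin] at card_ne card_le
    lia

end Determinant

lemma exists_fin_map_univ_eq {α : Type*} {n : ℕ} (s : Multiset α) (hs : s.card = n) :
    ∃ r : Fin n → α, univ.val.map r = s := by
  obtain ⟨l, rfl⟩ : ∃ l : List α, l = s := ⟨s.toList, s.coe_toList⟩
  subst hs
  exact ⟨l.get, (Fin.univ_val_map l.get).trans (congrArg _ (List.ofFn_get l))⟩

theorem stmt_10_general {R K : Type*} [CommRing R] [IsDomain R] [Field K] [DecidableEq K]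
    {φ : R →+* K} {π : R} (hπ : Prime π) (hker : RingHom.ker φ = Ideal.span {π})
    {h : R[X]} (hmonic : h.Monic) (hsplits : (h.map φ).Splits)
    (hsq : ¬ π ^ 2 ∣ Algebra.discr R (AdjoinRoot.powerBasis' hmonic).basis) :
    #(h.map φ).roots.toFinset +
      multiplicity π (Algebra.discr R (AdjoinRoot.powerBasis' hmonic).basis) = h.natDegree := by
  let pb := AdjoinRoot.powerBasis' hmonic
  have minpoly_gen : minpoly R pb.gen = h := minpoly_root_of_monic hmonic
  have card_roots : (h.map φ).roots.card = pb.dim := by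
    rw [← hsplits.natDegree_eq_card_roots, hmonic.natDegree_map, AdjoinRoot.powerBasis'_dim]
  obtain ⟨r, hr⟩ := exists_fin_map_univ_eq _ card_roots
  have gram := map_traceMatrix_powerBasis_eq_vandermonde_mul pb (minpoly_gen.symm ▸ hsplits)
    (hr.trans (by rw [minpoly_gen]))
  rw [← AdjoinRoot.powerBasis'_dim hmonic, ← hr]
  exact card_image_add_multiplicity_det_of_map_eq_vandermonde_mul hπ hker gram hsq

/-- Let `h ∈ ℤ[x]` be monic of degree `n` with nonzero discriminant `δ_h`,
and let `p` be a prime with `ν_p(δ_h) ≤ 1`. Then the number of distinct roots in `F̄_p` of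
the reduction of `h` mod `p` equals `n - ν_p(δ_h)`. -/
theorem stmt_10 (h : Polynomial ℤ) (hmonic : h.Monic) (n : ℕ) (hn : n = h.natDegree)
    (δh : ℤ) (hδh : δh = Algebra.discr ℤ (AdjoinRoot.powerBasis' hmonic).basis)
    (hδh0 : δh ≠ 0)
    (p : ℕ) [hp : Fact p.Prime] (hval : padicValInt p δh ≤ 1) :
    ((h.map (Int.castRingHom (AlgebraicClosure (ZMod p)))).roots.toFinset.card : ℤ) =
      (n : ℤ) - (padicValInt p δh : ℤ) := by
  have hsq : ¬ (p : ℤ) ^ 2 ∣ δh := by rw [padicValInt_dvd_iff]; lia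
  rw [eq_sub_iff_add_eq, padicValInt.of_ne_one_ne_zero hp.out.ne_one hδh0]
  subst hn hδh
  exact_mod_cast stmt_10_general (Nat.prime_iff_prime_int.mp hp.out)
    (CharP.ker_intAlgebraMap_eq_span p) hmonic (IsAlgClosed.splits _) hsq
end
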